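/- arXiv:1409.5767 — 3 statements merged into one kernel-verified Lean document; each statement's English description precedes it below -/
import Mathlib

section
/- Let n ≥ 1 and let S be an n × n matrix with natural-number entries, each entry being 0 or 1, and let N be a positive integer. The additive group ZMod N acts on the set of aperiodic closed walks of length N by rotation, (d · f) k = f (k + d). Then N times the number of orbits of this action equals ∑_{g | N} μ(g) · Tr(S^{N/g}), the sum running over the positive divisors g of N. -/
/-- A closed walk of length `N` with respect to an `n × n` zero-one matrix `S`:
a function `f : ZMod N → Fin n` such that consecutive vertices are adjacent. -/
def IsClosedWalk {n : ℕ} (S : Matrix (Fin n) (Fin n) ℕ) {N : ℕ}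
    (f : ZMod N → Fin n) : Prop :=
  ∀ k : ZMod N, S (f k) (f (k + 1)) = 1

/-- A closed walk is aperiodic if no nonzero rotation fixes it. -/
def IsAperiodic {n N : ℕ} (f : ZMod N → Fin n) : Prop :=
  ∀ d : ZMod N, d ≠ 0 → ∃ k : ZMod N, f (k + d) ≠ f k

/-- The type of aperiodic closed walks of length `N`. -/
def AperiodicWalk {n : ℕ} (S : Matrix (Fin n) (Fin n) ℕ) (N : ℕ) : Type :=
  {f : ZMod N → Fin n // IsClosedWalk S f ∧ IsAperiodic f}

/-- The rotation action of the additive group `ZMod N` on aperiodic closed walks: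
`d` sends `f` to `k ↦ f (k + d)`. -/
def rotAction {n : ℕ} (S : Matrix (Fin n) (Fin n) ℕ) (N : ℕ)
    (d : ZMod N) (f : AperiodicWalk S N) : AperiodicWalk S N :=
  ⟨fun k => f.1 (k + d), by
    obtain ⟨hw, ha⟩ := f.2
    constructor
    · intro k; simpa [add_right_comm] using hw (k + d)
    · intro e he
      obtain ⟨k, hk⟩ := ha e he
      exact ⟨k - d, by simpa [add_right_comm, sub_add_cancel] using hk⟩⟩

/-- Two aperiodic closed walks are equivalent if one is a rotation of the other. -/
def RotRel {n : ℕ} (S : Matrix (Fin n) (Fin n) ℕ) (N : ℕ)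
    (f g : AperiodicWalk S N) : Prop :=
  ∃ d : ZMod N, g = rotAction S N d f

/-!
Unrolling a closed walk of length `m` into an `m`-periodic sequence identifies the closed walks of
length `m` with the fixed points of `T^m`, where `T` is the shift on the one-sided topological
Markov chain of `S`; expanding the matrix power, there are `Tr S^m` of them. Under this
identification the aperiodic closed walks of length `N` are the points of minimal period exactly
`N`. The minimal period of a fixed point of `T^N` divides `N`, so Möbius inversion counts the
aperiodic closed walks, and they fall into orbits of size `N` because rotation acts freely on them.
-/

section PeriodicPoints

open Function

variable {X : Type*} {f : X → X} {N : ℕ}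

theorem ptsOfPeriod_eq_biUnion_divisors (hN : N ≠ 0) :
    ptsOfPeriod f N = ⋃ d ∈ (N.divisors : Set ℕ), {x | minimalPeriod f x = d} := by
  ext x
  simp [mem_ptsOfPeriod, isPeriodicPt_iff_minimalPeriod_dvd, hN]

theorem ncard_ptsOfPeriod_eq_sum_divisors (hN : N ≠ 0) (hfin : (ptsOfPeriod f N).Finite) :
    (ptsOfPeriod f N).ncard = ∑ d ∈ N.divisors, {x | minimalPeriod f x = d}.ncard := by
  have hunion := ptsOfPeriod_eq_biUnion_divisors (f := f) hN
  have hfibers : ∀ d ∈ (N.divisors : Set ℕ), {x | minimalPeriod f x = d}.Finite := fun d hd =>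
    hfin.subset (hunion ▸ Set.subset_biUnion_of_mem (u := fun d => {x | minimalPeriod f x = d}) hd)
  have hdisjoint : (N.divisors : Set ℕ).PairwiseDisjoint fun d => {x | minimalPeriod f x = d} :=
    fun d _ e _ hde => Set.disjoint_left.2 fun _ hd he => hde (hd.symm.trans he)
  rw [hunion, N.divisors.finite_toSet.ncard_biUnion hfibers hdisjoint, finsum_mem_coe_finset]

theorem ncard_minimalPeriod_eq_sum_moebius (hN : 0 < N) (hfin : (ptsOfPeriod f N).Finite) :
    ({x | minimalPeriod f x = N}.ncard : ℤ) =
      ∑ g ∈ N.divisors, ArithmeticFunction.moebius g * ((ptsOfPeriod f (N / g)).ncard : ℤ) := by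
  have hsum : ∀ m > 0, m ∈ {m | m ∣ N} →
      ∑ d ∈ m.divisors, ({x | minimalPeriod f x = d}.ncard : ℤ) = (ptsOfPeriod f m).ncard := by
    intro m hm hmN
    rw [ncard_ptsOfPeriod_eq_sum_divisors hm.ne' (hfin.subset fun x hx => hx.trans_dvd hmN),
      Nat.cast_sum]
  rw [← (ArithmeticFunction.sum_eq_iff_sum_mul_moebius_eq_on _ fun _ _ => dvd_trans).1 hsum N hN
    dvd_rfl]
  simpa only [Int.cast_id] using Nat.sum_divisorsAntidiagonal fun i j =>
    ArithmeticFunction.moebius i * ((ptsOfPeriod f j).ncard : ℤ)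

end PeriodicPoints

/-- Closed walks of length `N` in the directed graph of a relation `r`, with vertices indexed by
`ZMod N` so that rotations are translations of the index. -/
abbrev ClosedWalk {α : Type*} (r : α → α → Prop) (N : ℕ) : Type _ :=
  {f : ZMod N → α // ∀ k, r (f k) (f (k + 1))}

/-- The one-sided topological Markov chain of a relation `r`: the infinite walks in the directed
graph of `r`. It is the phase space in which closed walks of all lengths appear as periodic
points. -/
abbrev TopologicalMarkovChain {α : Type*} (r : α → α → Prop) : Type _ :=
  {x : ℕ → α // ∀ k, r (x k) (x (k + 1))}

namespace TopologicalMarkovChain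

open Function

variable {α : Type*} {r : α → α → Prop} {N : ℕ}

/-- The shift map of the topological Markov chain, forgetting the first vertex. -/
def shift (x : TopologicalMarkovChain r) : TopologicalMarkovChain r :=
  ⟨fun k => x.1 (k + 1), fun k => x.2 (k + 1)⟩

theorem shift_iterate_apply (x : TopologicalMarkovChain r) (m k : ℕ) :
    (shift^[m] x).1 k = x.1 (k + m) := by
  induction m generalizing x with
  | zero => rfl
  | succ m ih =>
    rw [iterate_succ_apply, ih, ← add_assoc]
    rfl

theorem isPeriodicPt_shift_iff {x : TopologicalMarkovChain r} {m : ℕ} :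
    IsPeriodicPt shift m x ↔ Periodic x.1 m := by
  simp only [IsPeriodicPt, IsFixedPt, Subtype.ext_iff, funext_iff, shift_iterate_apply, Periodic]

/-- The infinite walk that traverses a closed walk over and over, starting at the index `0`. -/
def unroll (f : ClosedWalk r N) : TopologicalMarkovChain r :=
  ⟨fun k => f.1 k, fun k => by simpa using f.2 k⟩

theorem isPeriodicPt_shift_unroll (f : ClosedWalk r N) : IsPeriodicPt shift N (unroll f) :=
  isPeriodicPt_shift_iff.2 fun k => by simp [unroll]

theorem isPeriodicPt_shift_unroll_iff [NeZero N] {f : ClosedWalk r N} {m : ℕ} :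
    IsPeriodicPt shift m (unroll f) ↔ Periodic f.1 (m : ZMod N) := by
  rw [isPeriodicPt_shift_iff]
  refine ⟨fun h k => ?_, fun h k => ?_⟩
  · simpa [unroll] using h k.val
  · simpa [unroll] using h k

theorem minimalPeriod_shift_unroll_eq_iff [NeZero N] {f : ClosedWalk r N} :
    minimalPeriod shift (unroll f) = N ↔ ∀ d, Periodic f.1 d → d = 0 := by
  constructor
  · intro h d hd
    rw [← ZMod.natCast_zmod_val d] at hd ⊢
    rw [ZMod.natCast_eq_zero_iff]
    simpa only [h] using (isPeriodicPt_shift_unroll_iff.2 hd).minimalPeriod_dvd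
  · intro h
    refine Nat.dvd_antisymm (isPeriodicPt_shift_unroll f).minimalPeriod_dvd ?_
    rw [← ZMod.natCast_eq_zero_iff]
    exact h _ (isPeriodicPt_shift_unroll_iff.1 (isPeriodicPt_minimalPeriod _ _))

theorem unroll_injective [NeZero N] :
    Injective (unroll : ClosedWalk r N → TopologicalMarkovChain r) := by
  intro f g h
  ext k
  simpa [unroll] using congrFun (congrArg Subtype.val h) k.val

theorem exists_unroll_eq [NeZero N] {x : TopologicalMarkovChain r} (hx : IsPeriodicPt shift N x) :
    ∃ f : ClosedWalk r N, unroll f = x := by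
  have hval (m : ℕ) : x.1 (m : ZMod N).val = x.1 m := by
    rw [ZMod.val_natCast, (isPeriodicPt_shift_iff.1 hx).map_mod_nat]
  refine ⟨⟨fun k => x.1 k.val, fun k => ?_⟩, Subtype.ext (funext hval)⟩
  have hsucc : x.1 (k + 1).val = x.1 (k.val + 1) := by simpa using hval (k.val + 1)
  simpa only [hsucc] using x.2 k.val

/-- Closed walks of length `N` as the points fixed by the `N`-th iterate of the shift. -/
noncomputable def unrollEquiv [NeZero N] :
    ClosedWalk r N ≃ ptsOfPeriod (shift (r := r)) N :=
  Equiv.ofBijective (fun f => ⟨unroll f, isPeriodicPt_shift_unroll f⟩)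
    ⟨fun _ _ h => unroll_injective (congrArg Subtype.val h), fun x =>
      (exists_unroll_eq x.2).imp fun _ => Subtype.ext⟩

theorem finite_ptsOfPeriod_shift [Finite α] [NeZero N] :
    (ptsOfPeriod (shift (r := r)) N).Finite :=
  Finite.of_equiv _ unrollEquiv

theorem ncard_ptsOfPeriod_shift [NeZero N] :
    (ptsOfPeriod (shift (r := r)) N).ncard = Nat.card (ClosedWalk r N) :=
  (Nat.card_congr unrollEquiv).symm

theorem ncard_minimalPeriod_shift [NeZero N] :
    {x : TopologicalMarkovChain r | minimalPeriod shift x = N}.ncard =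
      Nat.card {f : ClosedWalk r N // ∀ d, Periodic f.1 d → d = 0} := by
  have himage : {x : TopologicalMarkovChain r | minimalPeriod shift x = N} =
      unroll '' {f : ClosedWalk r N | ∀ d, Periodic f.1 d → d = 0} := by
    ext x
    constructor
    · intro hx
      obtain ⟨f, rfl⟩ := exists_unroll_eq (hx ▸ isPeriodicPt_minimalPeriod shift x)
      exact ⟨f, minimalPeriod_shift_unroll_eq_iff.1 hx, rfl⟩
    · rintro ⟨f, hf, rfl⟩
      exact minimalPeriod_shift_unroll_eq_iff.2 hf
  rw [himage, Set.ncard_image_of_injective _ unroll_injective]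
  rfl

end TopologicalMarkovChain

section TracePow

variable {ι R : Type*} [Fintype ι] [DecidableEq ι] [CommSemiring R]

theorem trace_pow_mul_eq_sum_prod (A B : Matrix ι ι R) (m : ℕ) :
    (A ^ m * B).trace =
      ∑ w : Fin (m + 1) → ι,
        (∏ k : Fin m, A (w k.castSucc) (w k.succ)) * B (w (Fin.last m)) (w 0) := by
  induction m generalizing B with
  | zero =>
    rw [← (Equiv.funUnique (Fin 1) ι).symm.sum_comp]
    simp [Matrix.trace]
  | succ m ih =>
    have htrace : (A ^ (m + 1) * B).trace = (A ^ m * (B * A)).trace := by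
      rw [pow_succ', mul_assoc, Matrix.trace_mul_comm, mul_assoc]
    rw [htrace, ih, ← (Fin.consEquiv fun _ : Fin (m + 2) => ι).sum_comp,
      Fintype.sum_prod_type_right]
    refine Finset.sum_congr rfl fun w _ => ?_
    rw [Matrix.mul_apply, Finset.mul_sum]
    refine Finset.sum_congr rfl fun a _ => ?_
    simp only [Fin.consEquiv_apply, Fin.prod_univ_succ, Fin.castSucc_zero, Fin.cons_zero,
      Fin.cons_succ, ← Fin.succ_castSucc, ← Fin.succ_last]
    ring

theorem trace_pow_eq_sum_prod (A : Matrix ι ι R) (N : ℕ) [NeZero N] :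
    (A ^ N).trace = ∑ f : ZMod N → ι, ∏ k, A (f k) (f (k + 1)) := by
  cases N with
  | zero => exact absurd rfl (NeZero.ne 0)
  | succ m =>
    change _ = ∑ f : Fin (m + 1) → ι, ∏ k, A (f k) (f (k + 1))
    rw [pow_succ, trace_pow_mul_eq_sum_prod]
    simp [Fin.prod_univ_castSucc]

theorem trace_pow_eq_card_closedWalk {A : Matrix ι ι R} (hA : ∀ i j, A i j = 0 ∨ A i j = 1)
    (N : ℕ) [NeZero N] :
    (A ^ N).trace = Nat.card (ClosedWalk (fun i j => A i j = 1) N) := by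
  classical
  have hboole (i j : ι) : A i j = if A i j = 1 then 1 else 0 := by
    split_ifs with h
    exacts [h, (hA i j).resolve_right h]
  calc
    (A ^ N).trace = ∑ f : ZMod N → ι, ∏ k, A (f k) (f (k + 1)) := trace_pow_eq_sum_prod A N
    _ = ∑ f : ZMod N → ι, if ∀ k, A (f k) (f (k + 1)) = 1 then 1 else 0 :=
      Finset.sum_congr rfl fun f _ =>
        (Finset.prod_congr rfl fun k _ => hboole _ _).trans Fintype.prod_boole
    _ = Nat.card (ClosedWalk (fun i j => A i j = 1) N) := by
      rw [Finset.sum_boole, Nat.card_eq_fintype_card, Fintype.card_subtype]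

end TracePow

section Rotation

variable {n : ℕ} {S : Matrix (Fin n) (Fin n) ℕ} {N : ℕ}

theorem isAperiodic_iff_forall_periodic {f : ZMod N → Fin n} :
    IsAperiodic f ↔ ∀ d, Function.Periodic f d → d = 0 := by
  simp only [IsAperiodic, Function.Periodic, ← not_forall, ne_eq, not_imp_not]

theorem card_aperiodicWalk_eq_ncard_minimalPeriod [NeZero N] :
    Nat.card (AperiodicWalk S N) =
      {x : TopologicalMarkovChain fun i j => S i j = 1 |
        Function.minimalPeriod TopologicalMarkovChain.shift x = N}.ncard := by
  rw [TopologicalMarkovChain.ncard_minimalPeriod_shift]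
  exact Nat.card_congr <|
    (Equiv.subtypeEquivRight fun _ => and_congr_right fun _ =>
      isAperiodic_iff_forall_periodic).trans
      (Equiv.subtypeSubtypeEquivSubtypeInter (IsClosedWalk S)
        fun f : ZMod N → Fin n => ∀ d, Function.Periodic f d → d = 0).symm

instance : AddAction (ZMod N) (AperiodicWalk S N) where
  vadd := rotAction S N
  zero_vadd f := Subtype.ext (funext fun k => congrArg f.1 (add_zero k))
  add_vadd d e f := Subtype.ext (funext fun k => congrArg f.1 (add_assoc k d e).symm)

theorem rotRel_iff_orbitRel {f g : AperiodicWalk S N} :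
    RotRel S N f g ↔ AddAction.orbitRel (ZMod N) (AperiodicWalk S N) f g :=
  (exists_congr fun _ => eq_comm).trans AddAction.mem_orbit_symm

theorem stabilizer_aperiodicWalk_eq_bot (f : AperiodicWalk S N) :
    AddAction.stabilizer (ZMod N) f = ⊥ := by
  refine (AddSubgroup.eq_bot_iff_forall _).2 fun d hd => ?_
  exact isAperiodic_iff_forall_periodic.1 f.2.2 d (congrFun (congrArg Subtype.val hd))

theorem mul_card_quot_rotRel :
    N * Nat.card (Quot (RotRel S N)) = Nat.card (AperiodicWalk S N) := by
  have hquot : Nat.card (Quot (RotRel S N)) =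
      Nat.card (Quotient (AddAction.orbitRel (ZMod N) (AperiodicWalk S N))) :=
    Nat.card_congr (Quot.congrRight fun _ _ => rotRel_iff_orbitRel)
  rw [Nat.card_congr (AddAction.selfEquivOrbitsQuotientProd stabilizer_aperiodicWalk_eq_bot),
    Nat.card_prod, Nat.card_zmod, hquot, mul_comm]

end Rotation

theorem card_orbits_aperiodic_closedWalks
    (n : ℕ) (hn : 1 ≤ n) (S : Matrix (Fin n) (Fin n) ℕ)
    (hS : ∀ i j, S i j = 0 ∨ S i j = 1) (N : ℕ) (hN : 0 < N) :
    (N : ℤ) * Nat.card (Quot (RotRel S N)) =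
      ∑ g ∈ N.divisors,
        (ArithmeticFunction.moebius g) * ((Matrix.trace (S ^ (N / g)) : ℕ) : ℤ) := by
  have : NeZero N := ⟨hN.ne'⟩
  rw [← Nat.cast_mul, mul_card_quot_rotRel, card_aperiodicWalk_eq_ncard_minimalPeriod,
    ncard_minimalPeriod_eq_sum_moebius hN TopologicalMarkovChain.finite_ptsOfPeriod_shift]
  refine Finset.sum_congr rfl fun g hg => ?_
  have : NeZero (N / g) := ⟨(Nat.div_pos (Nat.divisor_le hg) (Nat.pos_of_mem_divisors hg)).ne'⟩
  rw [TopologicalMarkovChain.ncard_ptsOfPeriod_shift, trace_pow_eq_card_closedWalk hS, Nat.cast_id]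
end

section
/- Let R be a commutative ring, T a square matrix over R, and l a positive integer. For every positive integer N, S(N, T^l) = ∑ S(t,T), where the sum runs over all positive integers t with lcm(l,t) = N·l (all such t divide N·l, so the sum is finite). -/
/-- `S(N,T) = ∑_{g ∣ N} μ(g) · Tr(T^{N/g})` for a square matrix `T` over a
commutative ring. -/
def moebiusTraceSum {R : Type*} [CommRing R] {α : Type*} [Fintype α]
    [DecidableEq α] (T : Matrix α α R) (N : ℕ) : R :=
  ∑ g ∈ N.divisors, (ArithmeticFunction.moebius g) • Matrix.trace (T ^ (N / g))

/-!
Möbius inversion characterises the Möbius transform `b` of a sequence `a` by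
`∑ t ∣ n, b t = a n`. It therefore suffices that the sums of `b` over the sets
`{t | lcm l t = d * l}`, added up over `d ∣ n`, give `a (n * l)`. They do, because these sets
partition the divisors of `n * l`. Matrix powers enter only through `(T ^ l) ^ n = T ^ (n * l)`.
-/

section LcmFibers

theorem divisors_filter_lcm_eq_of_dvd {l k m : ℕ} (hkm : k ∣ m) (hm : m ≠ 0) :
    {t ∈ m.divisors | Nat.lcm l t = k} = {t ∈ k.divisors | Nat.lcm l t = k} := by
  ext t
  simp only [Finset.mem_filter, Nat.mem_divisors, and_congr_left_iff]
  intro hlcm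
  have htk : t ∣ k := hlcm ▸ Nat.dvd_lcm_right l t
  exact ⟨fun _ => ⟨htk, ne_zero_of_dvd_ne_zero hm hkm⟩, fun _ => ⟨htk.trans hkm, hm⟩⟩

theorem lcm_div_left_mem_divisors {l N t : ℕ} (hl : 0 < l) (ht : t ∈ (N * l).divisors) :
    Nat.lcm l t / l ∈ N.divisors := by
  obtain ⟨htNl, hNl⟩ := Nat.mem_divisors.mp ht
  refine Nat.mem_divisors.mpr ⟨?_, left_ne_zero_of_mul hNl⟩
  rw [Nat.div_dvd_iff_dvd_mul (Nat.dvd_lcm_left l t) hl, mul_comm l N]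
  exact Nat.lcm_dvd (dvd_mul_left l N) htNl

theorem sum_divisors_sum_filter_lcm {M : Type*} [AddCommMonoid M] (f : ℕ → M) {l : ℕ}
    (hl : 0 < l) (N : ℕ) :
    ∑ d ∈ N.divisors, ∑ t ∈ (d * l).divisors with Nat.lcm l t = d * l, f t =
      ∑ t ∈ (N * l).divisors, f t := by
  rw [← Finset.sum_fiberwise_of_maps_to fun _ => lcm_div_left_mem_divisors hl]
  refine Finset.sum_congr rfl fun d hd => ?_
  obtain ⟨hdN, hN⟩ := Nat.mem_divisors.mp hd
  simp only [Nat.div_eq_iff_eq_mul_left hl (Nat.dvd_lcm_left l _)]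
  rw [divisors_filter_lcm_eq_of_dvd (Nat.mul_dvd_mul_right hdN l) (mul_ne_zero hN hl.ne')]

end LcmFibers

section MoebiusTransform

variable {A : Type*} [AddCommGroup A]

/-- The Möbius transform `n ↦ ∑_{g ∣ n} μ(g) · a(n/g)` of a sequence `a` in an abelian group,
through which `S(N,T)` is the transform of `n ↦ Tr(T^n)`. Its value at `0` is `0`, since
`Nat.divisors 0` is empty. -/
def moebiusTransform (a : ℕ → A) (n : ℕ) : A :=
  ∑ g ∈ n.divisors, ArithmeticFunction.moebius g • a (n / g)

theorem sum_divisors_eq_iff_moebiusTransform_eq {a b : ℕ → A} :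
    (∀ n > 0, ∑ t ∈ n.divisors, b t = a n) ↔ ∀ n > 0, moebiusTransform a n = b n := by
  simp only [moebiusTransform, ArithmeticFunction.sum_eq_iff_sum_smul_moebius_eq,
    Nat.sum_divisorsAntidiagonal fun g d => ArithmeticFunction.moebius g • a d]

theorem sum_divisors_moebiusTransform (a : ℕ → A) {n : ℕ} (hn : 0 < n) :
    ∑ t ∈ n.divisors, moebiusTransform a t = a n :=
  sum_divisors_eq_iff_moebiusTransform_eq.mpr (fun _ _ => rfl) n hn

theorem metropolis_rota_relation_general (a : ℕ → A) {l N : ℕ} (hl : 0 < l) (hN : 0 < N) :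
    moebiusTransform (fun n => a (n * l)) N =
      ∑ t ∈ (N * l).divisors with Nat.lcm l t = N * l, moebiusTransform a t := by
  refine sum_divisors_eq_iff_moebiusTransform_eq (a := fun n => a (n * l))
    (b := fun n => ∑ t ∈ (n * l).divisors with Nat.lcm l t = n * l, moebiusTransform a t)
    |>.mp (fun n hn => ?_) N hN
  calc ∑ d ∈ n.divisors, ∑ t ∈ (d * l).divisors with Nat.lcm l t = d * l, moebiusTransform a t
    _ = ∑ t ∈ (n * l).divisors, moebiusTransform a t := sum_divisors_sum_filter_lcm _ hl n
    _ = a (n * l) := sum_divisors_moebiusTransform a (Nat.mul_pos hn hl)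

end MoebiusTransform

theorem moebiusTraceSum_eq_moebiusTransform {R : Type*} [CommRing R] {α : Type*} [Fintype α]
    [DecidableEq α] (T : Matrix α α R) :
    moebiusTraceSum T = moebiusTransform fun n => Matrix.trace (T ^ n) :=
  rfl

theorem metropolis_rota_relation
    {R : Type*} [CommRing R] {α : Type*} [Fintype α] [DecidableEq α]
    (T : Matrix α α R) (l : ℕ) (hl : 0 < l) (N : ℕ) (hN : 0 < N) :
    moebiusTraceSum (T ^ l) N =
      ∑ t ∈ (N * l).divisors.filter (fun t => Nat.lcm l t = N * l),
        moebiusTraceSum T t := by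
  simp only [moebiusTraceSum_eq_moebiusTransform, ← pow_mul']
  exact metropolis_rota_relation_general (fun n => Matrix.trace (T ^ n)) hl hN
end

section
/- Let R be a commutative ring, T1 and T2 square matrices over R, and let r, s be relatively prime positive integers. For every positive integer N, S(N, T1^s ⊗ T2^r) = ∑ S(p,T1)·S(q,T2), where the sum runs over all pairs of positive integers (p,q) with lcm(r·p, s·q) = N·r·s (such pairs satisfy p | N·s and q | N·r, so the sum is finite). -/
/-!
By Möbius inversion, `S(·, T)` is the unique function whose sum over the divisors of each `N > 0` is
`Tr (T ^ N)`, so it suffices to sum the right-hand side over the divisors `d` of `N`. If `r` and `s`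
are coprime, `r * s` divides every `lcm (r * p) (s * q)`, and this `lcm` divides `N * r * s` exactly
when `p ∣ N * s` and `q ∣ N * r`. Hence the index sets of the sums for the various `d` partition
the product of the divisors of `N * s` and those of `N * r`, and the total factors as
`Tr (T1 ^ (N * s)) * Tr (T2 ^ (N * r))`, the trace of `(T1 ^ s ⊗ₖ T2 ^ r) ^ N`.
-/

open Kronecker

section DivisorPairs

variable {r s N : ℕ}

theorem lcm_mul_mul_dvd_mul_mul_iff (hr : 0 < r) (hs : 0 < s) {p q : ℕ} :
    Nat.lcm (r * p) (s * q) ∣ N * r * s ↔ p ∣ N * s ∧ q ∣ N * r := by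
  have hleft : r * p ∣ N * r * s ↔ p ∣ N * s := by
    rw [mul_comm N r, mul_assoc, Nat.mul_dvd_mul_iff_left hr]
  have hright : s * q ∣ N * r * s ↔ q ∣ N * r := by
    rw [mul_comm (N * r) s, Nat.mul_dvd_mul_iff_left hs]
  rw [Nat.lcm_dvd_iff, hleft, hright]

theorem mul_dvd_lcm_mul_mul (hrs : Nat.Coprime r s) (p q : ℕ) :
    r * s ∣ Nat.lcm (r * p) (s * q) :=
  hrs.mul_dvd_of_dvd_of_dvd ((dvd_mul_right r p).trans (Nat.dvd_lcm_left _ _))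
    ((dvd_mul_right s q).trans (Nat.dvd_lcm_right _ _))

/-- For positive `r`, `s` and `N`, the pairs `(p, q)` with `lcm (r * p) (s * q) = N * r * s`, which
index the right-hand side of the Metropolis–Rota relation. They are cut out of a product of sets of
divisors to make finiteness evident. -/
def lcmPairs (r s N : ℕ) : Finset (ℕ × ℕ) :=
  ((N * s).divisors ×ˢ (N * r).divisors).filter
    (fun p => Nat.lcm (r * p.1) (s * p.2) = N * r * s)

theorem mem_lcmPairs (hr : 0 < r) (hs : 0 < s) (hN : 0 < N) {p : ℕ × ℕ} :
    p ∈ lcmPairs r s N ↔ Nat.lcm (r * p.1) (s * p.2) = N * r * s := by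
  simp only [lcmPairs, Finset.mem_filter, Finset.mem_product, Nat.mem_divisors]
  refine and_iff_right_of_imp fun h => ?_
  obtain ⟨hp, hq⟩ := (lcm_mul_mul_dvd_mul_mul_iff hr hs).1 h.dvd
  exact ⟨⟨hp, (Nat.mul_pos hN hs).ne'⟩, ⟨hq, (Nat.mul_pos hN hr).ne'⟩⟩

theorem mem_divisors_product_divisors_iff (hr : 0 < r) (hs : 0 < s) (hN : 0 < N) {p : ℕ × ℕ} :
    p ∈ (N * s).divisors ×ˢ (N * r).divisors ↔
      Nat.lcm (r * p.1) (s * p.2) ∣ N * r * s := by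
  simp [lcm_mul_mul_dvd_mul_mul_iff hr hs, hr.ne', hs.ne', hN.ne']

theorem pairwiseDisjoint_lcmPairs (hr : 0 < r) (hs : 0 < s) (D : Set ℕ) :
    D.PairwiseDisjoint (lcmPairs r s) := by
  intro d _ e _ hne
  refine Finset.disjoint_left.2 fun p hd he => hne ?_
  have h : d * r * s = e * r * s :=
    (Finset.mem_filter.1 hd).2.symm.trans (Finset.mem_filter.1 he).2
  exact Nat.eq_of_mul_eq_mul_right hr (Nat.eq_of_mul_eq_mul_right hs h)

theorem biUnion_divisors_lcmPairs (hr : 0 < r) (hs : 0 < s) (hrs : Nat.Coprime r s)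
    (hN : 0 < N) :
    N.divisors.biUnion (lcmPairs r s) = (N * s).divisors ×ˢ (N * r).divisors := by
  ext p
  rw [Finset.mem_biUnion, mem_divisors_product_divisors_iff hr hs hN]
  constructor
  · rintro ⟨d, hd, hp⟩
    rw [(mem_lcmPairs hr hs (Nat.pos_of_mem_divisors hd)).1 hp]
    exact mul_dvd_mul_right (mul_dvd_mul_right (Nat.dvd_of_mem_divisors hd) r) s
  · intro hdvd
    obtain ⟨d, hd⟩ := mul_dvd_lcm_mul_mul hrs p.1 p.2
    have hlcm : Nat.lcm (r * p.1) (s * p.2) = d * r * s := by rw [hd, mul_comm, mul_assoc]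
    have hdN : d ∣ N := by
      rwa [hlcm, Nat.mul_dvd_mul_iff_right hs, Nat.mul_dvd_mul_iff_right hr] at hdvd
    exact ⟨d, Nat.mem_divisors.2 ⟨hdN, hN.ne'⟩,
      (mem_lcmPairs hr hs (Nat.pos_of_dvd_of_pos hdN hN)).2 hlcm⟩

theorem sum_divisors_sum_lcmPairs_mul {R : Type*} [NonUnitalNonAssocSemiring R] (hr : 0 < r)
    (hs : 0 < s) (hrs : Nat.Coprime r s) (hN : 0 < N) (f g : ℕ → R) :
    ∑ d ∈ N.divisors, ∑ p ∈ lcmPairs r s d, f p.1 * g p.2 =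
      (∑ p ∈ (N * s).divisors, f p) * ∑ q ∈ (N * r).divisors, g q := by
  rw [← Finset.sum_biUnion (pairwiseDisjoint_lcmPairs hr hs _),
    biUnion_divisors_lcmPairs hr hs hrs hN, Finset.sum_product, Finset.sum_mul_sum]

end DivisorPairs

theorem kronecker_pow {R α β : Type*} [CommSemiring R] [Fintype α] [DecidableEq α] [Fintype β]
    [DecidableEq β] (A : Matrix α α R) (B : Matrix β β R) (k : ℕ) :
    (A ⊗ₖ B) ^ k = (A ^ k) ⊗ₖ (B ^ k) := by
  induction k with
  | zero => simp
  | succ k ih => simp only [pow_succ, ih, Matrix.mul_kronecker_mul]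

section MoebiusTraceSum

variable {R : Type*} [CommRing R] {α β : Type*} [Fintype α] [DecidableEq α] [Fintype β]
  [DecidableEq β]

theorem sum_divisors_eq_trace_pow_iff_moebiusTraceSum_eq (T : Matrix α α R) (f : ℕ → R) :
    (∀ N > 0, ∑ d ∈ N.divisors, f d = Matrix.trace (T ^ N)) ↔
      ∀ N > 0, moebiusTraceSum T N = f N := by
  rw [ArithmeticFunction.sum_eq_iff_sum_smul_moebius_eq]
  simp only [moebiusTraceSum, Nat.sum_divisorsAntidiagonal
    (fun a b => ArithmeticFunction.moebius a • Matrix.trace (T ^ b))]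

theorem sum_divisors_moebiusTraceSum (T : Matrix α α R) {N : ℕ} (hN : 0 < N) :
    ∑ d ∈ N.divisors, moebiusTraceSum T d = Matrix.trace (T ^ N) :=
  (sum_divisors_eq_trace_pow_iff_moebiusTraceSum_eq T _).2 (fun _ _ => rfl) N hN

theorem trace_kronecker_pow_pow (A : Matrix α α R) (B : Matrix β β R) (r s N : ℕ) :
    Matrix.trace (((A ^ s) ⊗ₖ (B ^ r)) ^ N) =
      Matrix.trace (A ^ (N * s)) * Matrix.trace (B ^ (N * r)) := by
  rw [kronecker_pow, Matrix.trace_kronecker, ← pow_mul', ← pow_mul']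

theorem sum_divisors_sum_lcmPairs_moebiusTraceSum (A : Matrix α α R) (B : Matrix β β R)
    {r s N : ℕ} (hr : 0 < r) (hs : 0 < s) (hrs : Nat.Coprime r s) (hN : 0 < N) :
    ∑ d ∈ N.divisors, ∑ p ∈ lcmPairs r s d, moebiusTraceSum A p.1 * moebiusTraceSum B p.2 =
      Matrix.trace (((A ^ s) ⊗ₖ (B ^ r)) ^ N) := by
  rw [sum_divisors_sum_lcmPairs_mul hr hs hrs hN,
    sum_divisors_moebiusTraceSum A (Nat.mul_pos hN hs),
    sum_divisors_moebiusTraceSum B (Nat.mul_pos hN hr), trace_kronecker_pow_pow]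

theorem metropolis_rota_relation_powers_general (T1 : Matrix α α R) (T2 : Matrix β β R)
    {r s : ℕ} (hr : 0 < r) (hs : 0 < s) (hrs : Nat.Coprime r s) (N : ℕ) (hN : 0 < N) :
    moebiusTraceSum ((T1 ^ s) ⊗ₖ (T2 ^ r)) N =
      ∑ p ∈ lcmPairs r s N, moebiusTraceSum T1 p.1 * moebiusTraceSum T2 p.2 :=
  (sum_divisors_eq_trace_pow_iff_moebiusTraceSum_eq _
    (fun N => ∑ p ∈ lcmPairs r s N, moebiusTraceSum T1 p.1 * moebiusTraceSum T2 p.2)).1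
    (fun _ => sum_divisors_sum_lcmPairs_moebiusTraceSum T1 T2 hr hs hrs) N hN

end MoebiusTraceSum

theorem metropolis_rota_relation_powers
    {R : Type*} [CommRing R] (m n : ℕ)
    (T1 : Matrix (Fin m) (Fin m) R) (T2 : Matrix (Fin n) (Fin n) R)
    (r s : ℕ) (hr : 0 < r) (hs : 0 < s) (hrs : Nat.Coprime r s)
    (N : ℕ) (hN : 0 < N) :
    moebiusTraceSum ((T1 ^ s) ⊗ₖ (T2 ^ r)) N =
      ∑ p ∈ ((N * s).divisors ×ˢ (N * r).divisors).filter
          (fun p => Nat.lcm (r * p.1) (s * p.2) = N * r * s),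
        moebiusTraceSum T1 p.1 * moebiusTraceSum T2 p.2 :=
  metropolis_rota_relation_powers_general T1 T2 hr hs hrs N hN
end
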